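/- arXiv:0807.4536 — 7 statements merged into one kernel-verified Lean document; each statement's English description precedes it below -/
import Mathlib

section
/- For every integer k ≥ 0 and every real vector n = (n_1, n_2, n_3) ∈ ℝ³ with ‖n‖₂ ≤ 1, the (k+2)×(k+2) matrix ((k+1)/2)·I + n_1·J_x + n_2·J_y + n_3·J_z (with J_x, J_y, J_z the spin matrices of dimension d = k+2) is Hermitian and positive semidefinite. -/
open Matrix ComplexOrder

/-- The diagonal spin matrix `J_z` of dimension `d`, with `(J_z)_{m,m} = m - (d-1)/2`. -/
noncomputable def Jz (d : ℕ) : Matrix (Fin d) (Fin d) ℂ :=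
  Matrix.diagonal (fun m => (((m : ℝ) - ((d : ℝ) - 1) / 2 : ℝ) : ℂ))

/-- The raising operator `J_+` of dimension `d`, with `(J_+)_{m,m-1} = √(m(d-m))`. -/
noncomputable def Jplus (d : ℕ) : Matrix (Fin d) (Fin d) ℂ :=
  fun m m' => if (m : ℕ) = (m' : ℕ) + 1
    then ((Real.sqrt ((m : ℝ) * ((d : ℝ) - (m : ℝ))) : ℝ) : ℂ) else 0

/-- The lowering operator `J_- = (J_+)†`. -/
noncomputable def Jminus (d : ℕ) : Matrix (Fin d) (Fin d) ℂ := (Jplus d)ᴴ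

/-- `J_x = (J_+ + J_-)/2`. -/
noncomputable def Jx (d : ℕ) : Matrix (Fin d) (Fin d) ℂ :=
  (1 / 2 : ℂ) • (Jplus d + Jminus d)

/-- `J_y = (J_+ - J_-)/(2i)`. -/
noncomputable def Jy (d : ℕ) : Matrix (Fin d) (Fin d) ℂ :=
  (1 / (2 * Complex.I) : ℂ) • (Jplus d - Jminus d)

/-!
Two bosonic modes holding `N` particles in total span a space of dimension `N + 1`, on which the
Jordan–Schwinger map `M ↦ ∑ i j, M i j • aᵢ† aⱼ` sends the spin-`1/2` matrices to the spin matrices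
of dimension `N + 1` and the identity to `N`. The matrix of the theorem is therefore the image of
the qubit state `1/2 + n · J`. Positivity is inherited because the map is a congruence
`M ↦ a† (M ⊗ 1) a`, where `a` stacks `a₀` and `a₁`, and the qubit state itself is positive because
its trace `1` and its determinant `(1 - ‖n‖²) / 4` are nonnegative.
-/

open scoped Kronecker

section PosSemidef

variable {𝕜 ι l m : Type*} [RCLike 𝕜]

lemma posSemidef_fin_two_of_trace_nonneg_of_det_nonneg {A : Matrix (Fin 2) (Fin 2) 𝕜}
    (hA : A.IsHermitian) (htr : 0 ≤ A.trace) (hdet : 0 ≤ A.det) : A.PosSemidef := by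
  rw [hA.trace_eq_sum_eigenvalues, Fin.sum_univ_two, ← RCLike.ofReal_add,
    RCLike.ofReal_nonneg] at htr
  rw [hA.det_eq_prod_eigenvalues, Fin.prod_univ_two, ← RCLike.ofReal_mul,
    RCLike.ofReal_nonneg] at hdet
  rw [hA.posSemidef_iff_eigenvalues_nonneg, Pi.le_def, Fin.forall_fin_two]
  constructor <;> simp only [Pi.zero_apply] <;> by_contra! hneg <;> nlinarith

lemma posSemidef_sum_smul_conjTranspose_mul [Fintype ι] [Fintype l] [Finite m]
    {ρ : Matrix ι ι 𝕜} (hρ : ρ.PosSemidef) (a : ι → Matrix l m 𝕜) :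
    (∑ i, ∑ j, ρ i j • ((a i)ᴴ * a j)).PosSemidef := by
  classical
  let stacked : Matrix (ι × l) m 𝕜 := of fun p => a p.1 p.2
  have hstacked : ∑ i, ∑ j, ρ i j • ((a i)ᴴ * a j) =
      stackedᴴ * (ρ ⊗ₖ (1 : Matrix l l 𝕜)) * stacked := by
    ext x y
    simp only [stacked, Matrix.mul_apply, Fintype.sum_prod_type, Matrix.sum_apply,
      Matrix.smul_apply, smul_eq_mul, conjTranspose_apply, of_apply, kroneckerMap_apply,
      Matrix.one_apply, mul_ite, mul_one, mul_zero, Finset.sum_ite_eq', Finset.mem_univ, if_true,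
      Finset.mul_sum, Finset.sum_mul]
    rw [Finset.sum_comm]
    refine Finset.sum_congr rfl fun j _ => ?_
    rw [Finset.sum_comm]
    refine Finset.sum_congr rfl fun p _ => Finset.sum_congr rfl fun i _ => ?_
    ring
  rw [hstacked]
  exact (hρ.kronecker PosSemidef.one).conjTranspose_mul_mul_same stacked

end PosSemidef

/-- The annihilation operators `a₀`, `a₁` of two bosonic modes, as maps from the space of
`N` particles to that of `N - 1` particles. The basis vector with index `m` has `m` particles in
mode `1` and the others in mode `0`, so mode `1` is spin up. -/
noncomputable def annihilation (N : ℕ) : Fin 2 → Matrix (Fin N) (Fin (N + 1)) ℂ :=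
  ![of fun j m => if m = j.castSucc then (√((N : ℝ) - j) : ℂ) else 0,
    of fun j m => if m = j.succ then (√((j : ℝ) + 1) : ℂ) else 0]

/-- The Jordan–Schwinger map, the second quantization of a one-particle operator on `ℂ²`: it sends
`M` to `∑ i j, M i j • aᵢ† aⱼ` on the space of `N` bosons. -/
noncomputable def jordanSchwinger (N : ℕ) :
    Matrix (Fin 2) (Fin 2) ℂ →ₗ[ℂ] Matrix (Fin (N + 1)) (Fin (N + 1)) ℂ where
  toFun M := ∑ i, ∑ j, M i j • ((annihilation N i)ᴴ * annihilation N j)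
  map_add' M M' := by simp only [Matrix.add_apply, add_smul, Finset.sum_add_distrib]
  map_smul' c M := by
    simp only [Matrix.smul_apply, smul_eq_mul, mul_smul, Finset.smul_sum, RingHom.id_apply]

section JordanSchwinger

variable (N : ℕ)

lemma conjTranspose_annihilation_zero_mul_apply_castSucc {n : Type*} (B : Matrix (Fin N) n ℂ)
    (i : Fin N) (y : n) :
    ((annihilation N 0)ᴴ * B) i.castSucc y = (√((N : ℝ) - i) : ℂ) * B i y := by
  simp [Matrix.mul_apply, annihilation, apply_ite (starRingEnd ℂ)]

lemma conjTranspose_annihilation_zero_mul_apply_last {n : Type*} (B : Matrix (Fin N) n ℂ) (y : n) :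
    ((annihilation N 0)ᴴ * B) (Fin.last N) y = 0 := by
  simp [Matrix.mul_apply, annihilation, (Fin.castSucc_ne_last _).symm]

lemma conjTranspose_annihilation_one_mul_apply_succ {n : Type*} (B : Matrix (Fin N) n ℂ)
    (i : Fin N) (y : n) :
    ((annihilation N 1)ᴴ * B) i.succ y = (√((i : ℝ) + 1) : ℂ) * B i y := by
  simp [Matrix.mul_apply, annihilation, apply_ite (starRingEnd ℂ)]

lemma conjTranspose_annihilation_one_mul_apply_zero {n : Type*} (B : Matrix (Fin N) n ℂ) (y : n) :
    ((annihilation N 1)ᴴ * B) 0 y = 0 := by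
  simp [Matrix.mul_apply, annihilation, (Fin.succ_ne_zero _).symm]

lemma conjTranspose_annihilation_zero_mul_self :
    (annihilation N 0)ᴴ * annihilation N 0 = diagonal fun m : Fin (N + 1) => (N - m : ℂ) := by
  ext m m'
  cases m using Fin.lastCases with
  | last => simp [conjTranspose_annihilation_zero_mul_apply_last, diagonal_apply]
  | cast i =>
    have hi : (√((N : ℝ) - i) * √((N : ℝ) - i) : ℂ) = N - i := by
      rw [← Complex.ofReal_mul, Real.mul_self_sqrt (sub_nonneg.2 (mod_cast i.is_lt.le))]
      push_cast
      rfl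
    rw [conjTranspose_annihilation_zero_mul_apply_castSucc]
    simp [annihilation, diagonal_apply, hi, eq_comm]

lemma conjTranspose_annihilation_one_mul_self :
    (annihilation N 1)ᴴ * annihilation N 1 = diagonal fun m : Fin (N + 1) => (m : ℂ) := by
  ext m m'
  cases m using Fin.cases with
  | zero => simp [conjTranspose_annihilation_one_mul_apply_zero, diagonal_apply]
  | succ i =>
    have hi : (√((i : ℝ) + 1) * √((i : ℝ) + 1) : ℂ) = i + 1 := by
      rw [← Complex.ofReal_mul, Real.mul_self_sqrt (by positivity)]
      push_cast
      rfl
    rw [conjTranspose_annihilation_one_mul_apply_succ]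
    simp [annihilation, diagonal_apply, hi, eq_comm]

lemma Jplus_succ_apply (i : Fin N) (m : Fin (N + 1)) :
    Jplus (N + 1) i.succ m =
      if m = i.castSucc then (√((i : ℝ) + 1) : ℂ) * √((N : ℝ) - i) else 0 := by
  have hm : (i : ℕ) + 1 = m + 1 ↔ m = i.castSucc := by
    rw [Nat.add_right_cancel_iff, Fin.ext_iff, Fin.val_castSucc, eq_comm]
  rw [← Complex.ofReal_mul, ← Real.sqrt_mul (by positivity)]
  simp only [Jplus, Fin.val_succ, hm, Nat.cast_add, Nat.cast_one, add_sub_add_right_eq_sub]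

lemma conjTranspose_annihilation_one_mul_annihilation_zero :
    (annihilation N 1)ᴴ * annihilation N 0 = Jplus (N + 1) := by
  ext m m'
  cases m using Fin.cases with
  | zero => simp [conjTranspose_annihilation_one_mul_apply_zero, Jplus]
  | succ i =>
    rw [conjTranspose_annihilation_one_mul_apply_succ, Jplus_succ_apply]
    simp [annihilation]

lemma jordanSchwinger_apply (M : Matrix (Fin 2) (Fin 2) ℂ) :
    jordanSchwinger N M = ∑ i, ∑ j, M i j • ((annihilation N i)ᴴ * annihilation N j) :=
  rfl

lemma posSemidef_jordanSchwinger {ρ : Matrix (Fin 2) (Fin 2) ℂ} (hρ : ρ.PosSemidef) :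
    (jordanSchwinger N ρ).PosSemidef :=
  posSemidef_sum_smul_conjTranspose_mul hρ (annihilation N)

lemma jordanSchwinger_conjTranspose (M : Matrix (Fin 2) (Fin 2) ℂ) :
    jordanSchwinger N Mᴴ = (jordanSchwinger N M)ᴴ := by
  simp only [jordanSchwinger_apply, conjTranspose_sum, conjTranspose_smul, conjTranspose_mul,
    conjTranspose_conjTranspose, conjTranspose_apply]
  exact Finset.sum_comm

lemma jordanSchwinger_diagonal (c : Fin 2 → ℂ) :
    jordanSchwinger N (diagonal c) =
      diagonal fun m : Fin (N + 1) => c 0 * (N - m : ℂ) + c 1 * (m : ℂ) := by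
  simp [jordanSchwinger_apply, conjTranspose_annihilation_zero_mul_self,
    conjTranspose_annihilation_one_mul_self, ← diagonal_smul, Pi.smul_def]

lemma jordanSchwinger_one : jordanSchwinger N 1 = (N : ℂ) • 1 := by
  simp [← diagonal_one, jordanSchwinger_diagonal, ← diagonal_smul, Pi.smul_def]

lemma jordanSchwinger_Jz : jordanSchwinger N (Jz 2) = Jz (N + 1) := by
  rw [Jz, jordanSchwinger_diagonal, Jz]
  congr! 2 with m
  push_cast [Fin.val_zero, Fin.val_one]
  ring

lemma jordanSchwinger_Jplus : jordanSchwinger N (Jplus 2) = Jplus (N + 1) := by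
  have hJplus : Jplus 2 = !![0, 0; 1, 0] := by
    ext i j
    fin_cases i <;> fin_cases j <;> norm_num [Jplus]
  simp [jordanSchwinger_apply, conjTranspose_annihilation_one_mul_annihilation_zero, hJplus]

lemma jordanSchwinger_Jminus : jordanSchwinger N (Jminus 2) = Jminus (N + 1) := by
  rw [Jminus, jordanSchwinger_conjTranspose, jordanSchwinger_Jplus, Jminus]

lemma jordanSchwinger_Jx : jordanSchwinger N (Jx 2) = Jx (N + 1) := by
  simp only [Jx, map_smul, map_add, jordanSchwinger_Jplus, jordanSchwinger_Jminus]

lemma jordanSchwinger_Jy : jordanSchwinger N (Jy 2) = Jy (N + 1) := by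
  simp only [Jy, map_smul, map_sub, jordanSchwinger_Jplus, jordanSchwinger_Jminus]

end JordanSchwinger

/-- The qubit operator with Bloch vector `(n₁, n₂, n₃)`; it is a density matrix when the vector lies
in the unit ball. -/
noncomputable def qubitState (n₁ n₂ n₃ : ℝ) : Matrix (Fin 2) (Fin 2) ℂ :=
  (1 / 2 : ℂ) • 1 + (n₁ : ℂ) • Jx 2 + (n₂ : ℂ) • Jy 2 + (n₃ : ℂ) • Jz 2

section QubitState

variable (n₁ n₂ n₃ : ℝ)

lemma qubitState_eq_of : qubitState n₁ n₂ n₃ =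
    !![(1 - n₃ : ℂ) / 2, (n₁ + Complex.I * n₂) / 2;
      (n₁ - Complex.I * n₂) / 2, (1 + n₃ : ℂ) / 2] := by
  ext i j
  fin_cases i <;> fin_cases j <;>
    norm_num [qubitState, Jx, Jy, Jz, Jplus, Jminus] <;> ring

lemma isHermitian_qubitState : (qubitState n₁ n₂ n₃).IsHermitian := by
  rw [qubitState_eq_of]
  ext i j
  fin_cases i <;> fin_cases j <;> simp [sub_eq_add_neg]

lemma trace_qubitState : (qubitState n₁ n₂ n₃).trace = 1 := by
  rw [qubitState_eq_of, trace_fin_two_of]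
  ring

lemma det_qubitState : (qubitState n₁ n₂ n₃).det =
    ((1 - (n₁ ^ 2 + n₂ ^ 2 + n₃ ^ 2)) / 4 : ℝ) := by
  rw [qubitState_eq_of, det_fin_two_of]
  push_cast
  linear_combination (n₂ ^ 2 / 4 : ℂ) * Complex.I_sq

variable {n₁ n₂ n₃} in
lemma posSemidef_qubitState (hn : n₁ ^ 2 + n₂ ^ 2 + n₃ ^ 2 ≤ 1) :
    (qubitState n₁ n₂ n₃).PosSemidef := by
  refine posSemidef_fin_two_of_trace_nonneg_of_det_nonneg (isHermitian_qubitState n₁ n₂ n₃) ?_ ?_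
  · rw [trace_qubitState]
    exact zero_le_one
  · rw [det_qubitState, Complex.zero_le_real]
    linarith

lemma jordanSchwinger_qubitState (N : ℕ) :
    jordanSchwinger N (qubitState n₁ n₂ n₃) =
      ((N / 2 : ℝ) : ℂ) • 1 + (n₁ : ℂ) • Jx (N + 1) + (n₂ : ℂ) • Jy (N + 1) +
        (n₃ : ℂ) • Jz (N + 1) := by
  simp only [qubitState, map_add, map_smul, jordanSchwinger_one, jordanSchwinger_Jx,
    jordanSchwinger_Jy, jordanSchwinger_Jz, smul_smul]
  push_cast
  ring_nf

end QubitState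

/-- For every integer `k ≥ 0` and every real vector `n` with `‖n‖₂ ≤ 1`, the matrix
`((k+1)/2) I + n₁ J_x + n₂ J_y + n₃ J_z` of size `(k+2)×(k+2)` is Hermitian and
positive semidefinite. -/
theorem unruh_block_posSemidef (k : ℕ) (n₁ n₂ n₃ : ℝ)
    (hn : Real.sqrt (n₁ ^ 2 + n₂ ^ 2 + n₃ ^ 2) ≤ 1) :
    (((((k : ℝ) + 1) / 2 : ℝ) : ℂ) • (1 : Matrix (Fin (k + 2)) (Fin (k + 2)) ℂ) +
        (n₁ : ℂ) • Jx (k + 2) + (n₂ : ℂ) • Jy (k + 2) + (n₃ : ℂ) • Jz (k + 2)).IsHermitian ∧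
    (((((k : ℝ) + 1) / 2 : ℝ) : ℂ) • (1 : Matrix (Fin (k + 2)) (Fin (k + 2)) ℂ) +
        (n₁ : ℂ) • Jx (k + 2) + (n₂ : ℂ) • Jy (k + 2) + (n₃ : ℂ) • Jz (k + 2)).PosSemidef := by
  rw [Real.sqrt_le_one] at hn
  have hpos := posSemidef_jordanSchwinger (k + 1) (posSemidef_qubitState hn)
  rw [jordanSchwinger_qubitState, Nat.cast_succ] at hpos
  exact ⟨hpos.isHermitian, hpos⟩
end

section
/- Let α, β ∈ ℂ and k ≥ 0 an integer, and let σ_k be the (k+2)×(k+2) matrix with rows and columns indexed by m ∈ {0,…,k+1} whose entries are: (σ_k)_{m,m} = |α|²·m + |β|²·(k+1−m); (σ_k)_{m,m−1} = α·conj(β)·√(m(k+2−m)) for 1 ≤ m ≤ k+1; (σ_k)_{m−1,m} = conj(α)·β·√(m(k+2−m)) for 1 ≤ m ≤ k+1; and all other entries zero. Then σ_k = (|α|²+|β|²)·((k+1)/2)·I + n_1·J_x + n_2·J_y + n_3·J_z, where J_x, J_y, J_z are the spin matrices of dimension d = k+2 and n_1 = 2·Re(α·conj(β)), n_2 = −2·Im(α·conj(β)),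 n_3 = |α|² − |β|². In particular, when |α|² + |β|² = 1 one has σ_k = ((k+1)/2)·I + n_1·J_x + n_2·J_y + n_3·J_z with ‖(n_1,n_2,n_3)‖₂ = 1. -/
open Matrix

/-- The `k`-th block of the Unruh channel output for the dual-rail input `α|01⟩ + β|10⟩`:
diagonal entries `|α|² m + |β|² (k+1-m)`, sub-diagonal entries `α β̄ √(m(k+2-m))`,
super-diagonal entries `ᾱ β √(m(k+2-m))`. -/
noncomputable def unruhBlock (α β : ℂ) (k : ℕ) : Matrix (Fin (k + 2)) (Fin (k + 2)) ℂ :=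
  fun m m' =>
    if (m : ℕ) = (m' : ℕ) then
      ((‖α‖ ^ 2 * (m : ℝ) + ‖β‖ ^ 2 * ((k : ℝ) + 1 - (m : ℝ)) : ℝ) : ℂ)
    else if (m : ℕ) = (m' : ℕ) + 1 then
      α * (starRingEnd ℂ) β * ((Real.sqrt ((m : ℝ) * ((k : ℝ) + 2 - (m : ℝ))) : ℝ) : ℂ)
    else if (m' : ℕ) = (m : ℕ) + 1 then
      (starRingEnd ℂ) α * β * ((Real.sqrt ((m' : ℝ) * ((k : ℝ) + 2 - (m' : ℝ))) : ℝ) : ℂ)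
    else 0

/-!
The block is a diagonal matrix plus the ladder part `w J_+ + w̄ J_-`, where `w = α β̄`. The diagonal
is affine in `m`, hence a combination of `1` and `J_z`, while `J_± = J_x ± i J_y` turns the ladder
part into `2 Re w J_x - 2 Im w J_y`. The coefficients are the Stokes parameters of `(α, β)`, so that
`n₁² + n₂² + n₃² = 4 |α|² |β|² + (|α|² - |β|²)² = (|α|² + |β|²)²`.
-/

section SpinMatrices

variable (d : ℕ)

theorem Jminus_apply (m m' : Fin d) :
    Jminus d m m' = if (m' : ℕ) = (m : ℕ) + 1
      then ((Real.sqrt ((m' : ℝ) * ((d : ℝ) - (m' : ℝ))) : ℝ) : ℂ) else 0 := by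
  simp only [Jminus, conjTranspose_apply, Jplus, apply_ite star, star_zero, Complex.star_def,
    Complex.conj_ofReal]

theorem I_smul_Jy : Complex.I • Jy d = (1 / 2 : ℂ) • (Jplus d - Jminus d) := by
  have hI : Complex.I * (1 / (2 * Complex.I)) = 1 / 2 := by field_simp
  rw [Jy, smul_smul, hI]

theorem Jplus_eq_Jx_add_I_smul_Jy : Jplus d = Jx d + Complex.I • Jy d := by
  rw [Jx, I_smul_Jy]
  module

theorem Jminus_eq_Jx_sub_I_smul_Jy : Jminus d = Jx d - Complex.I • Jy d := by
  rw [Jx, I_smul_Jy]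
  module

theorem smul_Jplus_add_smul_Jminus (u v : ℂ) :
    u • Jplus d + v • Jminus d = (u + v) • Jx d + ((u - v) * Complex.I) • Jy d := by
  rw [Jplus_eq_Jx_add_I_smul_Jy, Jminus_eq_Jx_sub_I_smul_Jy]
  module

theorem smul_Jplus_add_conj_smul_Jminus (w : ℂ) :
    w • Jplus d + (starRingEnd ℂ) w • Jminus d =
      ((2 * w.re : ℝ) : ℂ) • Jx d + ((-(2 * w.im) : ℝ) : ℂ) • Jy d := by
  have him : (w - (starRingEnd ℂ) w) * Complex.I = ((-(2 * w.im) : ℝ) : ℂ) := by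
    rw [Complex.sub_conj, mul_assoc, Complex.I_mul_I, mul_neg_one, Complex.ofReal_neg]
  rw [smul_Jplus_add_smul_Jminus, Complex.add_conj, him]

theorem diagonal_affine_eq_smul_one_add_smul_Jz (a b : ℝ) :
    diagonal (fun m : Fin d => ((a * m + b * ((d : ℝ) - 1 - m) : ℝ) : ℂ)) =
      (((a + b) * (((d : ℝ) - 1) / 2) : ℝ) : ℂ) • (1 : Matrix (Fin d) (Fin d) ℂ) +
        ((a - b : ℝ) : ℂ) • Jz d := by
  rw [Jz, smul_one_eq_diagonal, ← diagonal_smul, diagonal_add]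
  congr 1
  ext m
  simp only [Pi.smul_apply, smul_eq_mul]
  push_cast
  ring

theorem diagonal_affine_add_ladder_eq_spin_combination (a b : ℝ) (w : ℂ) :
    diagonal (fun m : Fin d => ((a * m + b * ((d : ℝ) - 1 - m) : ℝ) : ℂ)) +
        (w • Jplus d + (starRingEnd ℂ) w • Jminus d) =
      (((a + b) * (((d : ℝ) - 1) / 2) : ℝ) : ℂ) • (1 : Matrix (Fin d) (Fin d) ℂ) +
        ((2 * w.re : ℝ) : ℂ) • Jx d + ((-(2 * w.im) : ℝ) : ℂ) • Jy d +
        ((a - b : ℝ) : ℂ) • Jz d := by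
  rw [diagonal_affine_eq_smul_one_add_smul_Jz, smul_Jplus_add_conj_smul_Jminus]
  abel

end SpinMatrices

theorem unruhBlock_eq_diagonal_add_ladder (α β : ℂ) (k : ℕ) :
    unruhBlock α β k =
      diagonal (fun m : Fin (k + 2) =>
          ((‖α‖ ^ 2 * m + ‖β‖ ^ 2 * (((k + 2 : ℕ) : ℝ) - 1 - m) : ℝ) : ℂ)) +
        ((α * (starRingEnd ℂ) β) • Jplus (k + 2) +
          (starRingEnd ℂ) (α * (starRingEnd ℂ) β) • Jminus (k + 2)) := by
  have hdim : ((k + 2 : ℕ) : ℝ) = k + 2 := by norm_cast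
  have hpred : (k : ℝ) + 2 - 1 = k + 1 := by ring
  have hconj : (starRingEnd ℂ) (α * (starRingEnd ℂ) β) = (starRingEnd ℂ) α * β := by simp
  ext m m'
  simp only [unruhBlock, Matrix.add_apply, Matrix.smul_apply, diagonal_apply, Jplus, Jminus_apply,
    smul_eq_mul, Fin.ext_iff, hdim, hpred, hconj]
  obtain hdiag | hsub | hsup | hfar : (m : ℕ) = m' ∨ (m : ℕ) = m' + 1 ∨ (m' : ℕ) = m + 1 ∨
      ((m : ℕ) ≠ m' ∧ (m : ℕ) ≠ m' + 1 ∧ (m' : ℕ) ≠ m + 1) := by omega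
  · simp [hdiag]
  · simp [hsub, add_assoc]
  · simp [hsup, add_assoc]
  · simp [hfar]

theorem sum_sq_stokes_parameters (α β : ℂ) :
    (2 * (α * (starRingEnd ℂ) β).re) ^ 2 + (-(2 * (α * (starRingEnd ℂ) β).im)) ^ 2 +
        (‖α‖ ^ 2 - ‖β‖ ^ 2) ^ 2 = (‖α‖ ^ 2 + ‖β‖ ^ 2) ^ 2 := by
  have hw : (α * (starRingEnd ℂ) β).re ^ 2 + (α * (starRingEnd ℂ) β).im ^ 2 =
      ‖α‖ ^ 2 * ‖β‖ ^ 2 := by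
    rw [← Complex.norm_conj β, ← mul_pow, ← norm_mul, Complex.sq_norm, Complex.normSq_apply,
      sq, sq]
  linear_combination 4 * hw

/-- The Unruh block `σ_k` equals
`(|α|²+|β|²)((k+1)/2) I + n₁ J_x + n₂ J_y + n₃ J_z` with
`n₁ = 2 Re(α β̄)`, `n₂ = -2 Im(α β̄)`, `n₃ = |α|² - |β|²`; in particular, when
`|α|² + |β|² = 1`, `σ_k = ((k+1)/2) I + n₁ J_x + n₂ J_y + n₃ J_z` with `‖n‖₂ = 1`. -/
theorem unruhBlock_eq_spin_combination (α β : ℂ) (k : ℕ) :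
    (unruhBlock α β k =
      (((‖α‖ ^ 2 + ‖β‖ ^ 2) * (((k : ℝ) + 1) / 2) : ℝ) : ℂ) •
          (1 : Matrix (Fin (k + 2)) (Fin (k + 2)) ℂ) +
        ((2 * (α * (starRingEnd ℂ) β).re : ℝ) : ℂ) • Jx (k + 2) +
        ((-(2 * (α * (starRingEnd ℂ) β).im) : ℝ) : ℂ) • Jy (k + 2) +
        ((‖α‖ ^ 2 - ‖β‖ ^ 2 : ℝ) : ℂ) • Jz (k + 2)) ∧
    (‖α‖ ^ 2 + ‖β‖ ^ 2 = 1 →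
      (unruhBlock α β k =
        ((((k : ℝ) + 1) / 2 : ℝ) : ℂ) • (1 : Matrix (Fin (k + 2)) (Fin (k + 2)) ℂ) +
          ((2 * (α * (starRingEnd ℂ) β).re : ℝ) : ℂ) • Jx (k + 2) +
          ((-(2 * (α * (starRingEnd ℂ) β).im) : ℝ) : ℂ) • Jy (k + 2) +
          ((‖α‖ ^ 2 - ‖β‖ ^ 2 : ℝ) : ℂ) • Jz (k + 2)) ∧
      Real.sqrt ((2 * (α * (starRingEnd ℂ) β).re) ^ 2 +
          (-(2 * (α * (starRingEnd ℂ) β).im)) ^ 2 +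
          (‖α‖ ^ 2 - ‖β‖ ^ 2) ^ 2) = 1) := by
  have hdim : ((k + 2 : ℕ) : ℝ) - 1 = k + 1 := by push_cast; ring
  have decomposition := (unruhBlock_eq_diagonal_add_ladder α β k).trans
    (diagonal_affine_add_ladder_eq_spin_combination (k + 2) _ _ _)
  rw [hdim] at decomposition
  refine ⟨decomposition, fun hnorm => ⟨?_, ?_⟩⟩
  · rwa [hnorm, one_mul] at decomposition
  · rw [sum_sq_stokes_parameters, hnorm, one_pow, Real.sqrt_one]
end

section
/- Let α, β ∈ ℂ with |α|² + |β|² = 1 and let k ≥ 0 be an integer. The (k+2)×(k+2) matrix σ_k with entries (σ_k)_{m,m} = |α|²·m + |β|²·(k+1−m), (σ_k)_{m,m−1} = α·conj(β)·√(m(k+2−m)), (σ_k)_{m−1,m} = conj(α)·β·√(m(k+2−m)) (for 1 ≤ m ≤ k+1), and zero otherwise, has characteristic polynomial ∏_{m=0}^{k+1} (X − m); that is, its eigenvalues are exactly 0, 1, 2, …, k+1, each with multiplicity one. -/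
open Matrix

/-!
In Schwinger's two-boson picture, index `m` of `Fin (n + 1)` stands for the Fock state
`|m, n - m⟩` with `n` excitations in all, and `σ_k = T Tᴴ`, where `T = α a† + β b†` creates one
excitation in the superposed mode and maps `k` excitations to `k + 1`. The commutation relation
`Tᴴ T = T Tᴴ + |α|² + |β|²` relates consecutive values of `k`. Since `T Tᴴ` and `Tᴴ T` have the
same characteristic polynomial up to a factor `X`, the spectrum for `k + 1` is the one for `k`
shifted by `|α|² + |β|²`, together with `0`.
-/

section CommRing

open Polynomial

variable {R : Type*} [CommRing R]

lemma charpoly_mul_of_mul_eq_mul_add_scalar (A : ∀ n, Matrix (Fin (n + 1)) (Fin n) R)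
    (B : ∀ n, Matrix (Fin n) (Fin (n + 1)) R) (s : R)
    (hBA : ∀ n, B (n + 1) * A (n + 1) = A n * B n + scalar (Fin (n + 1)) s) (n : ℕ) :
    (A n * B n).charpoly = ∏ m : Fin (n + 1), (X - C ((m : ℕ) * s)) := by
  induction n with
  | zero => simp
  | succ n ih =>
    have shift : (B (n + 1) * A (n + 1)).charpoly = (A n * B n).charpoly.comp (X - C s) := by
      rw [hBA, ← sub_neg_eq_add, ← map_neg, charpoly_sub_scalar, C_neg, sub_eq_add_neg]
    calc (A (n + 1) * B (n + 1)).charpoly = X * (B (n + 1) * A (n + 1)).charpoly := by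
          simp [charpoly_mul_comm_of_le (A (n + 1)) (B (n + 1))]
      _ = X * ∏ m : Fin (n + 1), (X - C ((m.succ : ℕ) * s)) := by
          rw [shift, ih, prod_comp]
          congr! 2 with m
          simp only [sub_comp, X_comp, C_comp, Fin.val_succ, Nat.cast_add, Nat.cast_one, add_mul,
            one_mul, C_add]
          ring
      _ = ∏ m : Fin (n + 2), (X - C ((m : ℕ) * s)) := by simp [Fin.prod_univ_succ]

end CommRing

/-- The creation operator `a†` of the first mode, `a† |l, n - 1 - l⟩ = √(l + 1) |l + 1, n - 1 - l⟩`,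
from the states with `n - 1` excitations (indexed by `Fin n`) to those with `n`. -/
noncomputable def createFst (n : ℕ) : Matrix (Fin (n + 1)) (Fin n) ℂ :=
  of fun m l => if m = l.succ then (√((l : ℝ) + 1) : ℂ) else 0

/-- The creation operator `b†` of the second mode, `b† |l, n - 1 - l⟩ = √(n - l) |l, n - l⟩`,
from the states with `n - 1` excitations (indexed by `Fin n`) to those with `n`. -/
noncomputable def createSnd (n : ℕ) : Matrix (Fin (n + 1)) (Fin n) ℂ :=
  of fun m l => if m = l.castSucc then (√((n : ℝ) - l) : ℂ) else 0

/-- The creation operator `α a† + β b†` of the mode in which the dual-rail input holds its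
excitation. -/
noncomputable def createMode (α β : ℂ) (n : ℕ) : Matrix (Fin (n + 1)) (Fin n) ℂ :=
  α • createFst n + β • createSnd n

lemma ofReal_sqrt_mul_self {x : ℝ} (hx : 0 ≤ x) : (√x : ℂ) * (√x : ℂ) = x := by
  rw [← Complex.ofReal_mul, Real.mul_self_sqrt hx]

lemma conjTranspose_createFst_mul_createFst (n : ℕ) :
    (createFst n)ᴴ * createFst n = diagonal fun l : Fin n => (l : ℂ) + 1 := by
  ext i j
  have hi : (0 : ℝ) ≤ i + 1 := by positivity
  by_cases h : i = j
  · subst h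
    simp [mul_apply, createFst, ofReal_sqrt_mul_self hi]
  · simp [mul_apply, createFst, h, Ne.symm h]

lemma createFst_mul_conjTranspose_createFst (n : ℕ) :
    createFst n * (createFst n)ᴴ = diagonal fun m : Fin (n + 1) => (m : ℂ) := by
  ext i j
  induction i using Fin.cases with
  | zero => simp [mul_apply, createFst, diagonal_apply, Fin.succ_ne_zero, eq_comm]
  | succ i =>
    have hi : (0 : ℝ) ≤ i + 1 := by positivity
    by_cases h : j = i.succ
    · subst h
      simp [mul_apply, createFst, ofReal_sqrt_mul_self hi]
    · simp [mul_apply, createFst, h, Ne.symm h]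

lemma conjTranspose_createSnd_mul_createSnd (n : ℕ) :
    (createSnd n)ᴴ * createSnd n = diagonal fun l : Fin n => (n : ℂ) - l := by
  ext i j
  have hi : (0 : ℝ) ≤ n - i := by simp [i.is_le']
  by_cases h : i = j
  · subst h
    simp [mul_apply, createSnd, ofReal_sqrt_mul_self hi]
  · simp [mul_apply, createSnd, h, Ne.symm h]

lemma createSnd_mul_conjTranspose_createSnd (n : ℕ) :
    createSnd n * (createSnd n)ᴴ = diagonal fun m : Fin (n + 1) => (n : ℂ) - m := by
  ext i j
  induction i using Fin.lastCases with
  | last => simp [mul_apply, createSnd, diagonal_apply, (Fin.castSucc_ne_last _).symm, eq_comm]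
  | cast i =>
    have hi : (0 : ℝ) ≤ n - i := by simp [i.is_le']
    by_cases h : j = i.castSucc
    · subst h
      simp [mul_apply, createSnd, ofReal_sqrt_mul_self hi]
    · simp [mul_apply, createSnd, h, Ne.symm h]

lemma createFst_mul_conjTranspose_createSnd (n : ℕ) :
    createFst n * (createSnd n)ᴴ = Jplus (n + 1) := by
  ext i j
  induction i using Fin.cases with
  | zero => simp [mul_apply, createFst, createSnd, Jplus, Fin.succ_ne_zero, eq_comm]
  | succ i =>
    have hi : (0 : ℝ) ≤ i + 1 := by positivity
    by_cases h : j = i.castSucc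
    · subst h
      simp [mul_apply, createFst, createSnd, Jplus, Real.sqrt_mul hi]
    · have h' : (i : ℕ) ≠ j := fun e => h (Fin.ext e.symm)
      simp [mul_apply, createFst, createSnd, Jplus, h, h']

lemma conjTranspose_createSnd_mul_createFst (n : ℕ) :
    (createSnd n)ᴴ * createFst n = Jplus n := by
  ext i j
  have hj : (0 : ℝ) ≤ j + 1 := by positivity
  by_cases h : (i : ℕ) = j + 1
  · have h' : j.succ = i.castSucc := Fin.ext h.symm
    simp [mul_apply, createFst, createSnd, Jplus, Real.sqrt_mul hj, h, h', mul_comm]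
  · have h' : j.succ ≠ i.castSucc := fun e => h (congrArg Fin.val e).symm
    simp [mul_apply, createFst, createSnd, Jplus, h, h']

lemma createSnd_mul_conjTranspose_createFst (n : ℕ) :
    createSnd n * (createFst n)ᴴ = Jminus (n + 1) := by
  rw [Jminus, ← createFst_mul_conjTranspose_createSnd, conjTranspose_mul,
    conjTranspose_conjTranspose]

lemma conjTranspose_createFst_mul_createSnd (n : ℕ) :
    (createFst n)ᴴ * createSnd n = Jminus n := by
  rw [Jminus, ← conjTranspose_createSnd_mul_createFst, conjTranspose_mul,
    conjTranspose_conjTranspose]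

lemma createMode_mul_conjTranspose_createMode (α β : ℂ) (n : ℕ) :
    createMode α β n * (createMode α β n)ᴴ =
      (α * star α) • diagonal (fun m : Fin (n + 1) => (m : ℂ)) +
        (β * star β) • diagonal (fun m : Fin (n + 1) => (n : ℂ) - m) +
        (α * star β) • Jplus (n + 1) + (star α * β) • Jminus (n + 1) := by
  rw [← createFst_mul_conjTranspose_createFst, ← createSnd_mul_conjTranspose_createSnd,
    ← createFst_mul_conjTranspose_createSnd, ← createSnd_mul_conjTranspose_createFst]
  simp only [createMode, conjTranspose_add, conjTranspose_smul, Matrix.add_mul, Matrix.mul_add,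
    Matrix.smul_mul, Matrix.mul_smul, smul_add, smul_smul]
  module

lemma conjTranspose_createMode_mul_createMode (α β : ℂ) (n : ℕ) :
    (createMode α β n)ᴴ * createMode α β n =
      (α * star α) • diagonal (fun l : Fin n => (l : ℂ) + 1) +
        (β * star β) • diagonal (fun l : Fin n => (n : ℂ) - l) +
        (α * star β) • Jplus n + (star α * β) • Jminus n := by
  rw [← conjTranspose_createFst_mul_createFst, ← conjTranspose_createSnd_mul_createSnd,
    ← conjTranspose_createFst_mul_createSnd, ← conjTranspose_createSnd_mul_createFst]
  simp only [createMode, conjTranspose_add, conjTranspose_smul, Matrix.add_mul, Matrix.mul_add,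
    Matrix.smul_mul, Matrix.mul_smul, smul_add, smul_smul]
  module

lemma createMode_commutation (α β : ℂ) (n : ℕ) :
    (createMode α β (n + 1))ᴴ * createMode α β (n + 1) =
      createMode α β n * (createMode α β n)ᴴ +
        scalar (Fin (n + 1)) (α * star α + β * star β) := by
  rw [conjTranspose_createMode_mul_createMode, createMode_mul_conjTranspose_createMode]
  have fst : diagonal (fun l : Fin (n + 1) => (l : ℂ) + 1) =
      diagonal (fun l : Fin (n + 1) => (l : ℂ)) + 1 := by
    rw [← diagonal_one, diagonal_add]
  have snd : diagonal (fun l : Fin (n + 1) => ((n + 1 : ℕ) : ℂ) - l) =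
      diagonal (fun l : Fin (n + 1) => (n : ℂ) - l) + 1 := by
    rw [← diagonal_one, diagonal_add]
    congr! 2
    push_cast
    ring
  rw [fst, snd, scalar_apply, ← smul_one_eq_diagonal]
  module

lemma unruhBlock_eq_createMode_mul_conjTranspose (α β : ℂ) (k : ℕ) :
    unruhBlock α β k = createMode α β (k + 1) * (createMode α β (k + 1))ᴴ := by
  rw [createMode_mul_conjTranspose_createMode]
  ext i j
  have dim : ((k + 1 + 1 : ℕ) : ℝ) = k + 2 := by push_cast; ring
  rcases eq_or_ne i j with rfl | hij
  · simp [unruhBlock, Jplus, Jminus, Complex.mul_conj']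
  have hij' : (i : ℕ) ≠ j := Fin.val_ne_of_ne hij
  by_cases hsub : (i : ℕ) = j + 1
  · have hsup : (j : ℕ) ≠ i + 1 := by omega
    simp [unruhBlock, Jplus, Jminus, hij, hij', if_pos hsub, if_neg hsup, dim]
  by_cases hsup : (j : ℕ) = i + 1
  · simp [unruhBlock, Jplus, Jminus, hij, hij', if_neg hsub, if_pos hsup, dim]
  · simp [unruhBlock, Jplus, Jminus, hij, hij', hsub, hsup]

theorem unruhBlock_charpoly_general (α β : ℂ) (k : ℕ) :
    (unruhBlock α β k).charpoly =
      ∏ m : Fin (k + 2), (Polynomial.X -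
        Polynomial.C ((m : ℕ) * ((‖α‖ ^ 2 + ‖β‖ ^ 2 : ℝ) : ℂ))) := by
  rw [unruhBlock_eq_createMode_mul_conjTranspose,
    charpoly_mul_of_mul_eq_mul_add_scalar (createMode α β) (fun n => (createMode α β n)ᴴ) _
      (createMode_commutation α β)]
  simp [Complex.mul_conj']

/-- For `|α|² + |β|² = 1`, the Unruh block `σ_k` has characteristic polynomial
`∏_{m=0}^{k+1} (X - m)`; that is, its eigenvalues are exactly `0, 1, …, k+1`,
each with multiplicity one. -/
theorem unruhBlock_charpoly (α β : ℂ) (hαβ : ‖α‖ ^ 2 + ‖β‖ ^ 2 = 1)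
    (k : ℕ) :
    Matrix.charpoly (unruhBlock α β k) =
      ∏ m : Fin (k + 2), (Polynomial.X - Polynomial.C ((m : ℕ) : ℂ)) := by
  simpa only [hαβ, Complex.ofReal_one, mul_one] using unruhBlock_charpoly_general α β k
end

section
/- For every real z with 0 < z < 1, the following identity holds: ∑_{k=0}^∞ ∑_{m=1}^{k+1} ( −(1−z)³·z^k·m·ln((1−z)³·z^k·m) ) = −3·( z·ln z/(1−z) + ln(1−z) ) − (1−z)²·∑_{m=2}^∞ m·(ln m)·z^{m−1}. (The right-hand side equals −3[z ln z/(1−z) + ln(1−z)] + (1−z)²·(∂/∂z)(∂/∂s) Li_s(z)|_{s=0}, where Li_s(z) = ∑_{k≥1} z^k/k^s is the polylogarithm.) -/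
/-!
The eigenvalues are `p k * m` with `p k = (1 - z) ^ 3 * z ^ k`, and `negMulLog_mul` separates the
two factors. Since `∑ m = (k + 2).choose 2` counts the triples with sum `k`, the `p k` part is the
entropy of the joint law of three independent geometric variables, which is three times the
entropy `binEntropy z / (1 - z)` of one of them. The `m` part is a power series whose coefficients
are partial sums, that is, `1 / (1 - z)` times the power series of the summands.
-/

open Finset Filter Asymptotics Real

theorem hasSum_natCast_mul_choose_mul_geometric {𝕜 : Type*} [NormedField 𝕜] (n : ℕ) {z : 𝕜}
    (hz : ‖z‖ < 1) :
    HasSum (fun k : ℕ ↦ (k : 𝕜) * ((k + n).choose n * z ^ k))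
      ((n + 1) * z / (1 - z) ^ (n + 2)) := by
  have choose_shift (k : ℕ) : (k + 1) * (k + 1 + n).choose n =
      (n + 1) * (k + (n + 1)).choose (n + 1) := by
    have h := Nat.choose_succ_right_eq (k + 1 + n) n
    rw [Nat.add_sub_cancel] at h
    rw [show k + (n + 1) = k + 1 + n by ring]
    linarith
  rw [← hasSum_nat_add_iff' 1]
  convert! (hasSum_choose_mul_geometric_of_norm_lt_one (n + 1) hz).mul_left ((n + 1) * z) using 1
  · funext k
    have h := congrArg (Nat.cast (R := 𝕜)) (choose_shift k)
    push_cast at h ⊢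
    linear_combination z ^ (k + 1) * h
  · simp [div_eq_mul_inv]

theorem hasSum_sum_range_mul_geometric {𝕜 : Type*} [NormedDivisionRing 𝕜] [CompleteSpace 𝕜]
    {u : ℕ → 𝕜} {z : 𝕜} (hz : ‖z‖ < 1) (hu : Summable fun n ↦ ‖u n * z ^ n‖) :
    HasSum (fun k ↦ (∑ i ∈ range (k + 1), u i) * z ^ k) ((∑' n, u n * z ^ n) / (1 - z)) := by
  rw [div_eq_mul_inv, ← tsum_geometric_of_norm_lt_one hz]
  convert! hasSum_sum_range_mul_of_summable_norm hu (summable_norm_geometric_of_norm_lt_one hz)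
    using 2 with k
  rw [sum_mul]
  refine sum_congr rfl fun i hi ↦ ?_
  rw [mul_assoc, ← pow_add, Nat.add_sub_cancel' (mem_range_succ_iff.mp hi)]

theorem isBigO_negMulLog_natCast_add_one :
    (fun n : ℕ ↦ negMulLog (n + 1)) =O[atTop] fun n : ℕ ↦ ((n ^ 2 : ℕ) : ℝ) := by
  refine .of_bound 2 (eventually_atTop.mpr ⟨1, fun n hn ↦ ?_⟩)
  have one_le : (1 : ℝ) ≤ n := mod_cast hn
  have log_succ_le : log (n + 1) ≤ n := by
    linarith [log_le_sub_one_of_pos (show (0 : ℝ) < n + 1 by positivity)]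
  have log_succ_nonneg : 0 ≤ log ((n : ℝ) + 1) := Real.log_nonneg (by linarith)
  calc ‖negMulLog ((n : ℝ) + 1)‖ = (n + 1) * log (n + 1) := by
        rw [negMulLog, neg_mul, norm_neg, norm_of_nonneg (by positivity)]
    _ ≤ (n + n) * n := by gcongr
    _ = 2 * ‖((n ^ 2 : ℕ) : ℝ)‖ := by
        rw [norm_natCast]
        push_cast
        ring

theorem hasSum_sum_negMulLog_mul_geometric {z : ℝ} (hz : ‖z‖ < 1) :
    HasSum (fun k : ℕ ↦ (∑ m ∈ Icc 1 (k + 1), negMulLog m) * z ^ k)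
      ((∑' j : ℕ, negMulLog (j + 2) * z ^ (j + 1)) / (1 - z)) := by
  have summable : Summable fun n : ℕ ↦ ‖negMulLog (n + 1) * z ^ n‖ :=
    summable_norm_mul_geometric_of_norm_lt_one' hz isBigO_negMulLog_natCast_add_one
  have drop_first : ∑' n : ℕ, negMulLog (n + 1) * z ^ n =
      ∑' j : ℕ, negMulLog (j + 2) * z ^ (j + 1) := by
    simp [summable.of_norm.tsum_eq_zero_add, add_assoc, one_add_one_eq_two]
  rw [← drop_first]
  convert! hasSum_sum_range_mul_geometric hz summable using 3 with k
  rw [range_eq_Ico, ← Ico_add_one_right_eq_Icc,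
    ← sum_Ico_add' (fun m : ℕ ↦ negMulLog m) 0 (k + 1) 1]
  push_cast
  rfl

/-- `(1 - z) ^ (n + 1) * z ^ k` is the probability of each of the `(k + n).choose n` outcomes of
`n + 1` independent geometric variables with sum `k`. -/
theorem hasSum_choose_mul_negMulLog_geometric (n : ℕ) {z : ℝ} (hz : ‖z‖ < 1) :
    HasSum (fun k : ℕ ↦ (k + n).choose n * negMulLog ((1 - z) ^ (n + 1) * z ^ k))
      ((n + 1) * (binEntropy z / (1 - z))) := by
  have one_sub_ne : 1 - z ≠ 0 := by
    linarith [(abs_lt.mp hz).2]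
  have weights := hasSum_choose_mul_geometric_of_norm_lt_one n hz
  have mean := hasSum_natCast_mul_choose_mul_geometric n hz
  convert! ((weights.mul_left ((n + 1) * log (1 - z))).add (mean.mul_left (log z))).mul_left
    (-(1 - z) ^ (n + 1)) using 1
  · funext k
    rw [negMulLog_mul]
    simp only [negMulLog, log_pow]
    push_cast
    ring
  · rw [binEntropy_eq_negMulLog_add_negMulLog_one_sub, negMulLog, negMulLog]
    field_simp
    ring

theorem sum_negMulLog_const_mul {ι : Type*} (s : Finset ι) (c : ℝ) (f : ι → ℝ) :
    ∑ i ∈ s, negMulLog (c * f i) =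
      (∑ i ∈ s, f i) * negMulLog c + c * ∑ i ∈ s, negMulLog (f i) := by
  simp only [negMulLog_mul, sum_add_distrib, sum_mul, mul_sum]

theorem hasSum_negMulLog_unruh_eigenvalues {z : ℝ} (hz : ‖z‖ < 1) :
    HasSum (fun k : ℕ ↦ ∑ m ∈ Icc 1 (k + 1), negMulLog ((1 - z) ^ 3 * z ^ k * m))
      (3 * (binEntropy z / (1 - z)) +
        (1 - z) ^ 2 * ∑' j : ℕ, negMulLog (j + 2) * z ^ (j + 1)) := by
  have one_sub_ne : 1 - z ≠ 0 := by
    linarith [(abs_lt.mp hz).2]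
  convert! (hasSum_choose_mul_negMulLog_geometric 2 hz).add
    ((hasSum_sum_negMulLog_mul_geometric hz).mul_left ((1 - z) ^ 3)) using 1
  · funext k
    have sum_multiplicities : ∑ m ∈ Icc 1 (k + 1), (m : ℝ) = (k + 2).choose 2 := by
      simpa using congrArg (Nat.cast (R := ℝ)) (Nat.sum_Icc_choose (k + 1) 1)
    rw [sum_negMulLog_const_mul, sum_multiplicities]
    ring
  · field_simp
    push_cast
    ring

/-- For every `0 < z < 1`,
`∑_{k=0}^∞ ∑_{m=1}^{k+1} ( -(1-z)³ z^k m ln((1-z)³ z^k m) )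
  = -3 (z ln z/(1-z) + ln(1-z)) - (1-z)² ∑_{m=2}^∞ m (ln m) z^{m-1}`,
the von Neumann entropy (in nats) of the Unruh channel output for a pure dual-rail
input state; the right-hand side equals
`-3[z ln z/(1-z) + ln(1-z)] + (1-z)² ∂_z ∂_s Li_s(z)|_{s=0}`. -/
theorem unruh_output_entropy_closed_form (z : ℝ) (hz0 : 0 < z) (hz1 : z < 1) :
    ∑' k : ℕ, ∑ m ∈ Finset.Icc 1 (k + 1),
        (-((1 - z) ^ 3 * z ^ k * (m : ℝ) *
          Real.log ((1 - z) ^ 3 * z ^ k * (m : ℝ)))) =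
      -3 * (z * Real.log z / (1 - z) + Real.log (1 - z)) -
        (1 - z) ^ 2 * ∑' j : ℕ, ((j : ℝ) + 2) * Real.log ((j : ℝ) + 2) * z ^ (j + 1) := by
  have one_sub_ne : 1 - z ≠ 0 := by linarith
  have norm_lt : ‖z‖ < 1 := by rwa [norm_of_nonneg hz0.le]
  have entropy := (hasSum_negMulLog_unruh_eigenvalues norm_lt).tsum_eq
  rw [binEntropy_eq_negMulLog_add_negMulLog_one_sub] at entropy
  simp only [negMulLog, neg_mul, tsum_neg] at entropy
  rw [entropy]
  field_simp
  ring
end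

section
/- For every real z with 0 < z < 1, the following identity holds: ∑_{k=0}^∞ ( −(k+2)·((1−z)³·z^k·(k+1)/2)·ln((1−z)³·z^k·(k+1)/2) ) = ln 2 − 3·ln(1−z) − 3·z·ln z/(1−z) − (1−z)³·∑_{k=0}^∞ ((k+1)(k+2)/2)·ln(k+1)·z^k, and in particular the family of summands on the left is summable. -/
/-!
Each eigenvalue `λ k` of the output, counted with its multiplicity, contributes the negative
binomial weight `C(k + 2, 2) (1 - z)³ z ^ k`, so the entropy is minus the mean of `log (λ k)` under
this distribution. As `log (λ k) = 3 log (1 - z) + k log z + log ((k + 1) / 2)`, only the total mass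
`1` and the mean `3 z / (1 - z)` are needed; the mean of `log (k + 1)` is finite because
`log (k + 1) ≤ k`.
-/

theorem hasSum_coe_mul_choose_mul_geometric_of_norm_lt_one {𝕜 : Type*} [NormedDivisionRing 𝕜]
    (d : ℕ) {r : 𝕜} (hr : ‖r‖ < 1) :
    HasSum (fun k : ℕ ↦ (k : 𝕜) * ((k + d).choose d * r ^ k))
      ((d + 1) * (r / (1 - r) ^ (d + 2))) := by
  have shift (k : ℕ) : ((k + 1 : ℕ) : 𝕜) * ((k + 1 + d).choose d * r ^ (k + 1)) =
      (d + 1) * (r * ((k + (d + 1)).choose (d + 1) * r ^ k)) := by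
    have absorb : (k + 1) * (k + 1 + d).choose d = (d + 1) * (k + (d + 1)).choose (d + 1) := by
      have h := Nat.choose_succ_right_eq (k + 1 + d) d
      rw [Nat.add_sub_cancel] at h
      rw [mul_comm, ← h, mul_comm, add_right_comm, add_assoc]
    calc ((k + 1 : ℕ) : 𝕜) * ((k + 1 + d).choose d * r ^ (k + 1))
      _ = ((d + 1 : ℕ) : 𝕜) * ((k + (d + 1)).choose (d + 1) * r ^ (k + 1)) := by
        rw [← mul_assoc, ← Nat.cast_mul, absorb, Nat.cast_mul, mul_assoc]
      _ = (d + 1) * (r * ((k + (d + 1)).choose (d + 1) * r ^ k)) := by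
        rw [Nat.cast_add_one, pow_succ', ← mul_assoc _ r, Nat.cast_comm, mul_assoc r]
  rw [← hasSum_nat_add_iff' 1]
  simp only [shift, Finset.sum_range_one, Nat.cast_zero, zero_mul, sub_zero]
  simpa only [mul_one_div] using
    ((hasSum_choose_mul_geometric_of_norm_lt_one (d + 1) hr).mul_left r).mul_left ((d : 𝕜) + 1)

/-- The negative binomial distribution: the probability of `k` failures before the `(d + 1)`-st
success in independent trials that fail with probability `z`. The number of successes is written
`d + 1` to match the power series of `(1 - z) ^ (-(d + 1))`. For `d = 2` it gives the weights of
the distinct eigenvalues of the channel output. -/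
noncomputable def negBinomialWeight (d : ℕ) (z : ℝ) (k : ℕ) : ℝ :=
  (1 - z) ^ (d + 1) * ((k + d).choose d * z ^ k)

theorem negBinomialWeight_two (z : ℝ) (k : ℕ) :
    negBinomialWeight 2 z k = (1 - z) ^ 3 * (((k : ℝ) + 1) * (k + 2) / 2 * z ^ k) := by
  rw [negBinomialWeight, Nat.cast_choose_two]
  push_cast
  ring

section NegBinomial

variable {z : ℝ} (d : ℕ)

theorem hasSum_negBinomialWeight (hz : ‖z‖ < 1) : HasSum (negBinomialWeight d z) 1 := by
  have one_sub_ne_zero : 1 - z ≠ 0 := (sub_pos.2 (lt_of_abs_lt hz)).ne'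
  convert! (hasSum_choose_mul_geometric_of_norm_lt_one d hz).mul_left ((1 - z) ^ (d + 1)) using 1
  field_simp

theorem hasSum_negBinomialWeight_mul_natCast (hz : ‖z‖ < 1) :
    HasSum (fun k ↦ negBinomialWeight d z k * k) ((d + 1) * (z / (1 - z))) := by
  have one_sub_ne_zero : 1 - z ≠ 0 := (sub_pos.2 (lt_of_abs_lt hz)).ne'
  convert! (hasSum_coe_mul_choose_mul_geometric_of_norm_lt_one d hz).mul_left
    ((1 - z) ^ (d + 1)) using 1
  · funext k
    rw [negBinomialWeight]
    ring
  · field_simp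
    ring

theorem summable_negBinomialWeight_mul_log_natCast_add_one (hz : ‖z‖ < 1) :
    Summable fun k : ℕ ↦ negBinomialWeight d z k * Real.log (k + 1) := by
  refine (hasSum_negBinomialWeight_mul_natCast d hz).summable.abs.of_norm_bounded fun k ↦ ?_
  have log_nonneg : 0 ≤ Real.log ((k : ℝ) + 1) := Real.log_nonneg (by simp)
  have log_le : Real.log ((k : ℝ) + 1) ≤ k := by
    simpa using Real.log_le_sub_one_of_pos k.cast_add_one_pos
  rw [Real.norm_eq_abs, abs_mul, abs_mul, abs_of_nonneg log_nonneg, Nat.abs_cast]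
  gcongr

theorem hasSum_negBinomialWeight_mul_log (hz0 : z ≠ 0) (hz : ‖z‖ < 1) {c : ℕ → ℝ}
    (hc : ∀ k, c k ≠ 0) {s : ℝ}
    (hs : HasSum (fun k ↦ negBinomialWeight d z k * Real.log (c k)) s) :
    HasSum (fun k ↦ negBinomialWeight d z k * Real.log ((1 - z) ^ (d + 1) * z ^ k * c k))
      ((d + 1) * Real.log (1 - z) + (d + 1) * (z / (1 - z)) * Real.log z + s) := by
  have one_sub_ne_zero : 1 - z ≠ 0 := (sub_pos.2 (lt_of_abs_lt hz)).ne'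
  have log_eq (k : ℕ) : Real.log ((1 - z) ^ (d + 1) * z ^ k * c k) =
      (d + 1) * Real.log (1 - z) + k * Real.log z + Real.log (c k) := by
    rw [Real.log_mul (by positivity) (hc k), Real.log_mul (by positivity) (by positivity),
      Real.log_pow, Real.log_pow, Nat.cast_add_one]
  convert! (((hasSum_negBinomialWeight d hz).mul_right ((d + 1) * Real.log (1 - z))).add
    ((hasSum_negBinomialWeight_mul_natCast d hz).mul_right (Real.log z))).add hs using 1
  · funext k
    rw [log_eq]
    ring
  · ring

end NegBinomial

/-- For every `0 < z < 1`, the von Neumann entropy (in nats) of the Unruh channel output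
for the maximally mixed dual-rail input, whose eigenvalues are `(1-z)³ z^k (k+1)/2` with
multiplicity `k+2`, satisfies
`∑_{k=0}^∞ ( -(k+2) ((1-z)³ z^k (k+1)/2) ln((1-z)³ z^k (k+1)/2) )
  = ln 2 - 3 ln(1-z) - 3 z ln z/(1-z) - (1-z)³ ∑_{k=0}^∞ ((k+1)(k+2)/2) ln(k+1) z^k`,
and in particular the family of summands on the left is summable. -/
theorem unruh_maximally_mixed_entropy (z : ℝ) (hz0 : 0 < z) (hz1 : z < 1) :
    Summable (fun k : ℕ =>
      -(((k : ℝ) + 2) * ((1 - z) ^ 3 * z ^ k * ((k : ℝ) + 1) / 2) *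
        Real.log ((1 - z) ^ 3 * z ^ k * ((k : ℝ) + 1) / 2))) ∧
    ∑' k : ℕ,
        (-(((k : ℝ) + 2) * ((1 - z) ^ 3 * z ^ k * ((k : ℝ) + 1) / 2) *
          Real.log ((1 - z) ^ 3 * z ^ k * ((k : ℝ) + 1) / 2))) =
      Real.log 2 - 3 * Real.log (1 - z) - 3 * z * Real.log z / (1 - z) -
        (1 - z) ^ 3 *
          ∑' k : ℕ, (((k : ℝ) + 1) * ((k : ℝ) + 2) / 2) * Real.log ((k : ℝ) + 1) * z ^ k := by
  have hz : ‖z‖ < 1 := by rwa [Real.norm_of_nonneg hz0.le]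
  have log_half : HasSum (fun k : ℕ ↦ negBinomialWeight 2 z k * Real.log (((k : ℝ) + 1) / 2))
      ((∑' k : ℕ, negBinomialWeight 2 z k * Real.log (k + 1)) - 1 * Real.log 2) := by
    simpa only [Real.log_div (Nat.cast_add_one_ne_zero _) two_ne_zero, mul_sub] using
      (summable_negBinomialWeight_mul_log_natCast_add_one 2 hz).hasSum.sub
        ((hasSum_negBinomialWeight 2 hz).mul_right (Real.log 2))
  have term_eq (k : ℕ) :
      -(((k : ℝ) + 2) * ((1 - z) ^ 3 * z ^ k * (k + 1) / 2) *
        Real.log ((1 - z) ^ 3 * z ^ k * (k + 1) / 2)) =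
      -(negBinomialWeight 2 z k * Real.log ((1 - z) ^ (2 + 1) * z ^ k * ((k + 1) / 2))) := by
    rw [negBinomialWeight_two, mul_div_assoc _ ((k : ℝ) + 1)]
    ring
  have entropy := (hasSum_negBinomialWeight_mul_log 2 hz0.ne' hz (fun k ↦ by positivity)
    log_half).neg
  have log_sum : (1 - z) ^ 3 *
      ∑' k : ℕ, (((k : ℝ) + 1) * ((k : ℝ) + 2) / 2) * Real.log ((k : ℝ) + 1) * z ^ k =
      ∑' k : ℕ, negBinomialWeight 2 z k * Real.log (k + 1) := by
    rw [← tsum_mul_left]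
    exact tsum_congr fun k ↦ by rw [negBinomialWeight_two]; ring
  simp only [term_eq, log_sum]
  exact ⟨entropy.summable, entropy.tsum_eq.trans (by push_cast; ring)⟩
end

section
/- Let f : ℝ → ℝ be defined on (−1, 1) by f(z) = (1−z)·∑_{k=2}^∞ (ln k)·z^k. Then for every z with |z| < 1, the second derivative of f at z exists and equals ∑_{k=0}^∞ (k+1)(k+2)·ln((k+2)/(k+1))·z^k. -/
/-! Multiplying a power series `∑ aₙ zⁿ` by `1 - z` replaces its coefficients by their backward
differences `aₙ - aₙ₋₁`, without shrinking the disc of convergence. Inside that disc the product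
may be differentiated twice term by term. For `aₙ = log n` the radius is at least `1` because the
growth is sublinear, and the differences are `log (n / (n - 1))` for `n ≥ 2`. -/

open Filter Asymptotics FormalMultilinearSeries
open scoped Topology

/-- The backward differences `aₙ - aₙ₋₁` of a sequence, with the convention `a₋₁ = 0`: they are
the coefficients of the product of `∑ aₙ zⁿ` with `1 - z`. -/
def backwardDiff {G : Type*} [Sub G] (a : ℕ → G) : ℕ → G
  | 0 => a 0
  | n + 1 => a (n + 1) - a n

theorem one_sub_mul_tsum_mul_pow {R : Type*} [CommRing R] [TopologicalSpace R]
    [IsTopologicalRing R] [T2Space R] {a : ℕ → R} {z : R} (h : Summable fun n ↦ a n * z ^ n) :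
    (1 - z) * ∑' n, a n * z ^ n = ∑' n, backwardDiff a n * z ^ n := by
  have h_tail : Summable fun n ↦ a (n + 1) * z ^ (n + 1) :=
    (summable_nat_add_iff (f := fun n ↦ a n * z ^ n) 1).mpr h
  have h_diff (n : ℕ) : backwardDiff a (n + 1) * z ^ (n + 1) =
      a (n + 1) * z ^ (n + 1) - z * (a n * z ^ n) := by
    rw [backwardDiff]
    ring
  have h_backward : Summable fun n ↦ backwardDiff a n * z ^ n := by
    rw [← summable_nat_add_iff 1]
    simpa only [h_diff] using h_tail.sub (h.mul_left z)
  calc (1 - z) * ∑' n, a n * z ^ n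
    _ = ∑' n, a n * z ^ n - ∑' n, z * (a n * z ^ n) := by
      rw [sub_mul, one_mul, h.tsum_mul_left]
    _ = a 0 * z ^ 0 + (∑' n, a (n + 1) * z ^ (n + 1) - ∑' n, z * (a n * z ^ n)) := by
      rw [h.tsum_eq_zero_add, add_sub_assoc]
    _ = a 0 * z ^ 0 + ∑' n, backwardDiff a (n + 1) * z ^ (n + 1) := by
      rw [← h_tail.tsum_sub (h.mul_left z), tsum_congr h_diff]
    _ = ∑' n, backwardDiff a n * z ^ n := h_backward.tsum_eq_zero_add.symm

section NontriviallyNormedField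

variable {𝕜 : Type*} [NontriviallyNormedField 𝕜] {a : ℕ → 𝕜} {z : 𝕜}

theorem one_le_radius_ofScalars_of_isBigO_pow {k : ℕ}
    (ha : a =O[atTop] fun n : ℕ ↦ (n : ℝ) ^ k) : 1 ≤ (ofScalars 𝕜 a).radius := by
  refine ENNReal.le_of_forall_nnreal_lt fun r hr ↦
    (ofScalars 𝕜 a).le_radius_of_isBigO ?_
  have hr_one : (r : ℝ) < 1 := mod_cast hr
  simp only [ofScalars_norm]
  exact (ha.norm_left.mul (isBigO_refl _ _)).trans
    ((tendsto_pow_const_mul_const_pow_of_lt_one k r.coe_nonneg hr_one).isBigO_one ℝ)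

theorem summable_mul_pow_of_lt_radius_ofScalars [CompleteSpace 𝕜]
    (hz : ‖z‖ₑ < (ofScalars 𝕜 a).radius) : Summable fun n ↦ a n * z ^ n := by
  simpa only [ofScalars_apply_eq, smul_eq_mul] using
    (ofScalars 𝕜 a).summable (x := z) (by simpa using hz)

theorem radius_ofScalars_le_radius_ofScalars_deriv :
    (ofScalars 𝕜 a).radius ≤ (ofScalars 𝕜 fun n ↦ (n + 1) * a (n + 1)).radius := by
  refine (ofScalars 𝕜 a).radius_le_radius_derivSeries.trans (radius_le_of_le fun n ↦ ?_)
  have h_coeff : (ofScalars 𝕜 a).derivSeries.coeff n 1 = (n + 1) * a (n + 1) := by simp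
  rw [ofScalars_norm, ← h_coeff, norm_apply_eq_norm_coef]
  simpa using ((ofScalars 𝕜 a).derivSeries.coeff n).le_opNorm 1

theorem hasDerivAt_tsum_mul_pow [CompleteSpace 𝕜] (hz : ‖z‖ₑ < (ofScalars 𝕜 a).radius) :
    HasDerivAt (fun y ↦ ∑' n, a n * y ^ n) (∑' n : ℕ, (n + 1) * a (n + 1) * z ^ n) z := by
  have h_sum : (ofScalars 𝕜 a).sum = fun y ↦ ∑' n, a n * y ^ n := ofScalarsSum_eq_tsum a
  have h_summable := (ofScalars 𝕜 a).derivSeries.summable (x := z)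
    (by simpa using hz.trans_le (ofScalars 𝕜 a).radius_le_radius_derivSeries)
  have h_deriv_sum : (ofScalars 𝕜 a).derivSeries.sum z 1 =
      ∑' n : ℕ, (n + 1) * a (n + 1) * z ^ n := by
    rw [FormalMultilinearSeries.sum, ← ContinuousLinearMap.apply_apply (𝕜 := 𝕜) (1 : 𝕜),
      ContinuousLinearMap.map_tsum _ h_summable]
    refine tsum_congr fun n ↦ ?_
    rw [apply_eq_pow_smul_coeff, map_smul, ContinuousLinearMap.apply_apply,
      derivSeries_coeff_one, coeff_ofScalars, nsmul_eq_mul, smul_eq_mul, mul_comm]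
    push_cast
    rfl
  rw [← h_sum, ← h_deriv_sum]
  exact (FormalMultilinearSeries.hasFDerivAt_sum hz).hasDerivAt

theorem hasDerivAt_deriv_tsum_mul_pow [CompleteSpace 𝕜] (hz : ‖z‖ₑ < (ofScalars 𝕜 a).radius) :
    HasDerivAt (deriv fun y ↦ ∑' n, a n * y ^ n)
      (∑' n : ℕ, (n + 1) * (n + 2) * a (n + 2) * z ^ n) z := by
  have h_deriv : (deriv fun y ↦ ∑' n, a n * y ^ n) =ᶠ[𝓝 z]
      fun y ↦ ∑' n : ℕ, (n + 1) * a (n + 1) * y ^ n := by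
    filter_upwards [continuous_enorm.continuousAt.eventually_lt_const hz] with y hy
    exact (hasDerivAt_tsum_mul_pow hy).deriv
  have h_second := hasDerivAt_tsum_mul_pow
    (hz.trans_le radius_ofScalars_le_radius_ofScalars_deriv)
  refine (h_second.congr_of_eventuallyEq h_deriv).congr_deriv (tsum_congr fun n ↦ ?_)
  push_cast
  ring

theorem radius_ofScalars_le_radius_ofScalars_backwardDiff :
    (ofScalars 𝕜 a).radius ≤ (ofScalars 𝕜 (backwardDiff a)).radius := by
  refine ENNReal.le_of_forall_nnreal_lt fun r hr ↦ ?_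
  obtain ⟨C, hC, h_bound⟩ := (ofScalars 𝕜 a).norm_mul_pow_le_of_lt_radius hr
  simp only [ofScalars_norm] at h_bound
  refine le_radius_of_bound _ (C + C * r) fun n ↦ ?_
  rw [ofScalars_norm]
  cases n with
  | zero => exact (h_bound 0).trans (le_add_of_nonneg_right (by positivity))
  | succ n =>
    calc ‖a (n + 1) - a n‖ * (r : ℝ) ^ (n + 1)
      _ ≤ (‖a (n + 1)‖ + ‖a n‖) * (r : ℝ) ^ (n + 1) := by gcongr; exact norm_sub_le _ _
      _ = ‖a (n + 1)‖ * (r : ℝ) ^ (n + 1) + ‖a n‖ * (r : ℝ) ^ n * r := by ring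
      _ ≤ C + C * r := by gcongr <;> exact h_bound _

theorem hasDerivAt_deriv_one_sub_mul_tsum_mul_pow [CompleteSpace 𝕜]
    (hz : ‖z‖ₑ < (ofScalars 𝕜 a).radius) :
    HasDerivAt (deriv fun y ↦ (1 - y) * ∑' n, a n * y ^ n)
      (∑' n : ℕ, (n + 1) * (n + 2) * (a (n + 2) - a (n + 1)) * z ^ n) z := by
  have h_eq : (fun y ↦ (1 - y) * ∑' n, a n * y ^ n) =ᶠ[𝓝 z]
      fun y ↦ ∑' n, backwardDiff a n * y ^ n := by
    filter_upwards [continuous_enorm.continuousAt.eventually_lt_const hz] with y hy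
    exact one_sub_mul_tsum_mul_pow (summable_mul_pow_of_lt_radius_ofScalars hy)
  exact (hasDerivAt_deriv_tsum_mul_pow
    (hz.trans_le radius_ofScalars_le_radius_ofScalars_backwardDiff)).congr_of_eventuallyEq
    h_eq.deriv

end NontriviallyNormedField

section RCLike

variable {𝕜 : Type*} [RCLike 𝕜]

theorem one_le_radius_ofScalars_log :
    1 ≤ (ofScalars 𝕜 fun n : ℕ ↦ (Real.log n : 𝕜)).radius := by
  refine one_le_radius_ofScalars_of_isBigO_pow (k := 1) ?_
  have h_log : (fun n : ℕ ↦ Real.log n) =O[atTop] fun n : ℕ ↦ (n : ℝ) :=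
    Real.isLittleO_log_id_atTop.isBigO.comp_tendsto tendsto_natCast_atTop_atTop
  refine .of_norm_left ?_
  simpa only [RCLike.norm_ofReal, pow_one, ← Real.norm_eq_abs] using h_log.norm_left

theorem tsum_log_mul_pow_eq_tsum_add_two (z : 𝕜) :
    ∑' n : ℕ, (Real.log n : 𝕜) * z ^ n =
      ∑' n : ℕ, (Real.log (n + 2) : 𝕜) * z ^ (n + 2) := by
  have h_support : (fun n : ℕ ↦ (Real.log n : 𝕜) * z ^ n).support ⊆ Set.range (· + 2) := by
    intro n hn
    match n with
    -- `Real.log 0 = 0`, so the term `n = 0` vanishes like `n = 1`.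
    | 0 | 1 => simp at hn
    | n + 2 => exact ⟨n, rfl⟩
  rw [← (add_left_injective 2).tsum_eq h_support]
  push_cast
  rfl

theorem second_deriv_polylog_expression_general {f : 𝕜 → 𝕜}
    (hf : ∀ z : 𝕜, ‖z‖ < 1 →
      f z = (1 - z) * ∑' n : ℕ, (Real.log (n + 2) : 𝕜) * z ^ (n + 2))
    {z : 𝕜} (hz : ‖z‖ < 1) :
    HasDerivAt (deriv f)
      (∑' n : ℕ, (n + 1) * (n + 2) * (Real.log ((n + 2) / (n + 1)) : 𝕜) * z ^ n) z := by
  have hf_eq : f =ᶠ[𝓝 z] fun y ↦ (1 - y) * ∑' n : ℕ, (Real.log n : 𝕜) * y ^ n := by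
    filter_upwards [continuous_norm.continuousAt.eventually_lt_const hz] with y hy
    rw [hf y hy, tsum_log_mul_pow_eq_tsum_add_two]
  have h_radius : ‖z‖ₑ < (ofScalars 𝕜 fun n : ℕ ↦ (Real.log n : 𝕜)).radius :=
    (enorm_lt_coe.mpr hz).trans_le one_le_radius_ofScalars_log
  refine ((hasDerivAt_deriv_one_sub_mul_tsum_mul_pow h_radius).congr_of_eventuallyEq
    hf_eq.deriv).congr_deriv (tsum_congr fun n ↦ ?_)
  rw [Real.log_div (by positivity) (by positivity)]
  push_cast
  rfl

end RCLike

/-- Let `f : ℝ → ℝ` satisfy `f z = (1-z) ∑_{k=2}^∞ (ln k) z^k` on `(-1, 1)`. Then for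
every `z` with `|z| < 1`, the second derivative of `f` at `z` exists and equals
`∑_{k=0}^∞ (k+1)(k+2) ln((k+2)/(k+1)) z^k`. -/
theorem second_deriv_polylog_expression (f : ℝ → ℝ)
    (hf : ∀ z ∈ Set.Ioo (-1 : ℝ) 1,
      f z = (1 - z) * ∑' j : ℕ, Real.log ((j : ℝ) + 2) * z ^ (j + 2)) :
    ∀ z : ℝ, |z| < 1 →
      HasDerivAt (deriv f)
        (∑' k : ℕ, ((k : ℝ) + 1) * ((k : ℝ) + 2) *
          Real.log (((k : ℝ) + 2) / ((k : ℝ) + 1)) * z ^ k) z :=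
  fun _ ↦ second_deriv_polylog_expression_general fun z hz ↦ hf z (abs_lt.mp hz)
end

section
/- For every real z with 0 < z < 1, one has (1−z)³·∑_{k=0}^∞ (k+1)(k+2)·ln((k+2)/(k+1))·z^k < 2·ln 2, while at z = 0 the left-hand side equals 2·ln 2. Consequently the quantity Q_p = (1/2)·(1 − ((1−z)³/(4·ln 2))·∑_{k=0}^∞ (k+1)(k+2)·ln((k+2)/(k+1))·z^k·2) is strictly positive for all z ∈ (0,1) and equals 0 at z = 0. -/
/-!
The weights `(1 - z) ^ 3 * (k + 1) * (k + 2) / 2 * z ^ k` form a negative binomial distribution,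
so `(1 - z) ^ 3 * ∑' k, (k + 1) * (k + 2) * log ((k + 2) / (k + 1)) * z ^ k` is twice a weighted
mean of the numbers `log ((k + 2) / (k + 1))`. These decrease strictly from `log 2` at `k = 0`.
For `0 < z < 1` every weight is positive, so the mean is less than `log 2`; at `z = 0` all the mass
sits on `k = 0`.
-/

open Set

theorem tsum_mul_lt_mul_of_hasSum {ι : Type*} {w c : ι → ℝ} {W C : ℝ} {j : ι}
    (hw : HasSum w W) (hw_nonneg : ∀ i, 0 ≤ w i) (hc_bdd : BddBelow (range c))
    (hc_le : ∀ i, c i ≤ C) (hwj : 0 < w j) (hcj : c j < C) :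
    ∑' i, w i * c i < W * C := by
  obtain ⟨m, hm⟩ := hc_bdd
  have hc_abs (i : ι) : |c i| ≤ max |m| |C| :=
    abs_le_max_abs_abs (hm (mem_range_self i)) (hc_le i)
  have hwc : Summable fun i ↦ w i * c i := by
    refine .of_norm_bounded (hw.summable.mul_right (max |m| |C|)) fun i ↦ ?_
    rw [norm_mul, Real.norm_of_nonneg (hw_nonneg i)]
    exact mul_le_mul_of_nonneg_left (hc_abs i) (hw_nonneg i)
  calc
    ∑' i, w i * c i < ∑' i, w i * C :=
      hwc.tsum_lt_tsum (fun i ↦ mul_le_mul_of_nonneg_left (hc_le i) (hw_nonneg i))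
        (mul_lt_mul_of_pos_left hcj hwj) (hw.summable.mul_right C)
    _ = W * C := (hw.mul_right C).tsum_eq

theorem one_sub_pow_mul_tsum_choose_mul_lt (n : ℕ) {c : ℕ → ℝ} {z C : ℝ} {j : ℕ}
    (hz₀ : 0 < z) (hz₁ : z < 1) (hc_bdd : BddBelow (range c)) (hc_le : ∀ k, c k ≤ C)
    (hcj : c j < C) :
    (1 - z) ^ (n + 1) * ∑' k : ℕ, ((k + n).choose n : ℝ) * z ^ k * c k < C := by
  have hweights : HasSum (fun k : ℕ ↦ ((k + n).choose n : ℝ) * z ^ k) (1 / (1 - z) ^ (n + 1)) :=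
    hasSum_choose_mul_geometric_of_norm_lt_one n (by rwa [Real.norm_of_nonneg hz₀.le])
  have hchoose : 0 < ((j + n).choose n : ℝ) := mod_cast Nat.choose_pos (Nat.le_add_left n j)
  have hmean := tsum_mul_lt_mul_of_hasSum hweights (fun k ↦ by positivity) hc_bdd hc_le
    (by positivity : 0 < ((j + n).choose n : ℝ) * z ^ j) hcj
  rwa [one_div_mul_eq_div, lt_div_iff₀' (pow_pos (sub_pos.mpr hz₁) _)] at hmean

theorem strictAntiOn_log_add_two_div_add_one :
    StrictAntiOn (fun x : ℝ ↦ Real.log ((x + 2) / (x + 1))) (Ioi (-1)) := by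
  intro x hx y hy hxy
  have hx₁ : 0 < x + 1 := neg_lt_iff_pos_add.mp hx
  have hy₁ : 0 < y + 1 := neg_lt_iff_pos_add.mp hy
  refine Real.log_lt_log (div_pos (by linarith) hy₁) ?_
  rw [div_lt_div_iff₀ hy₁ hx₁]
  linarith

theorem log_add_two_div_add_one_nonneg {x : ℝ} (hx : -1 < x) :
    0 ≤ Real.log ((x + 2) / (x + 1)) :=
  Real.log_nonneg <| (one_le_div (by linarith)).mpr (by linarith)

theorem log_add_two_div_add_one_le_log_two {x : ℝ} (hx : 0 ≤ x) :
    Real.log ((x + 2) / (x + 1)) ≤ Real.log 2 := by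
  simpa using strictAntiOn_log_add_two_div_add_one.antitoneOn
    (show (0 : ℝ) ∈ Ioi (-1) by simp) (neg_one_lt_zero.trans_le hx) hx

theorem log_add_two_div_add_one_lt_log_two {x : ℝ} (hx : 0 < x) :
    Real.log ((x + 2) / (x + 1)) < Real.log 2 := by
  simpa using strictAntiOn_log_add_two_div_add_one
    (show (0 : ℝ) ∈ Ioi (-1) by simp) (neg_one_lt_zero.trans hx) hx

/-- The power series in the closed form of the private quantum capacity, as a function of
`z = tanh² r`. It converges only for `|z| < 1`; elsewhere `∑'` returns the junk value `0`. -/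
noncomputable def logRatioSeries (z : ℝ) : ℝ :=
  ∑' k : ℕ, ((k : ℝ) + 1) * ((k : ℝ) + 2) * Real.log (((k : ℝ) + 2) / ((k : ℝ) + 1)) * z ^ k

theorem logRatioSeries_eq_two_mul_tsum_choose (z : ℝ) :
    logRatioSeries z =
      2 * ∑' k : ℕ, ((k + 2).choose 2 : ℝ) * z ^ k * Real.log (((k : ℝ) + 2) / ((k : ℝ) + 1)) := by
  rw [logRatioSeries, ← tsum_mul_left]
  refine tsum_congr fun k ↦ ?_
  rw [Nat.cast_choose_two]
  push_cast
  ring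

theorem logRatioSeries_zero : logRatioSeries 0 = 2 * Real.log 2 := by
  rw [logRatioSeries, tsum_eq_single 0 fun k hk ↦ by rw [zero_pow hk, mul_zero]]
  norm_num

theorem one_sub_pow_three_mul_logRatioSeries_lt {z : ℝ} (hz₀ : 0 < z) (hz₁ : z < 1) :
    (1 - z) ^ 3 * logRatioSeries z < 2 * Real.log 2 := by
  have hbdd : BddBelow (range fun k : ℕ ↦ Real.log (((k : ℝ) + 2) / ((k : ℝ) + 1))) :=
    ⟨0, forall_mem_range.mpr fun k ↦
      log_add_two_div_add_one_nonneg (neg_one_lt_zero.trans_le k.cast_nonneg)⟩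
  have hmean := one_sub_pow_mul_tsum_choose_mul_lt 2 hz₀ hz₁ hbdd
    (fun k ↦ log_add_two_div_add_one_le_log_two k.cast_nonneg)
    (log_add_two_div_add_one_lt_log_two (Nat.cast_pos.mpr one_pos))
  rw [logRatioSeries_eq_two_mul_tsum_choose, mul_left_comm]
  exact mul_lt_mul_of_pos_left hmean two_pos

/-- The private quantum capacity `Q_p`, in qubits per channel use, of the dual-rail qubit channel
against an eavesdropper with acceleration parameter `z = tanh² r`. It is defined by the series
form of the paper's closed formula. -/
noncomputable def privateQuantumCapacity (z : ℝ) : ℝ :=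
  (1 / 2) * (1 - ((1 - z) ^ 3 / (4 * Real.log 2)) * logRatioSeries z * 2)

theorem privateQuantumCapacity_eq (z : ℝ) :
    privateQuantumCapacity z =
      (1 - (1 - z) ^ 3 * logRatioSeries z / (2 * Real.log 2)) / 2 := by
  rw [privateQuantumCapacity]
  ring

theorem privateQuantumCapacity_pos {z : ℝ} (hz₀ : 0 < z) (hz₁ : z < 1) :
    0 < privateQuantumCapacity z := by
  have htwo_log : 0 < 2 * Real.log 2 := mul_pos two_pos (Real.log_pos one_lt_two)
  rw [privateQuantumCapacity_eq]
  exact half_pos <| sub_pos.mpr <|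
    (div_lt_one htwo_log).mpr (one_sub_pow_three_mul_logRatioSeries_lt hz₀ hz₁)

theorem privateQuantumCapacity_zero : privateQuantumCapacity 0 = 0 := by
  have htwo_log : 2 * Real.log 2 ≠ 0 := mul_ne_zero two_ne_zero (Real.log_pos one_lt_two).ne'
  rw [privateQuantumCapacity_eq, logRatioSeries_zero, sub_zero, one_pow, one_mul,
    div_self htwo_log, sub_self, zero_div]

/-- For every `0 < z < 1`, `(1-z)³ ∑_{k=0}^∞ (k+1)(k+2) ln((k+2)/(k+1)) z^k < 2 ln 2`,
while at `z = 0` the left-hand side equals `2 ln 2`. Consequently the private quantum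
capacity `Q_p = (1/2)(1 - ((1-z)³/(4 ln 2)) ∑_{k=0}^∞ (k+1)(k+2) ln((k+2)/(k+1)) z^k · 2)`
is strictly positive for all `z ∈ (0,1)` and equals `0` at `z = 0`. -/
theorem private_quantum_capacity_positive :
    (∀ z : ℝ, 0 < z → z < 1 →
      (1 - z) ^ 3 * (∑' k : ℕ, ((k : ℝ) + 1) * ((k : ℝ) + 2) *
          Real.log (((k : ℝ) + 2) / ((k : ℝ) + 1)) * z ^ k) < 2 * Real.log 2) ∧
    (1 - (0 : ℝ)) ^ 3 * (∑' k : ℕ, ((k : ℝ) + 1) * ((k : ℝ) + 2) *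
        Real.log (((k : ℝ) + 2) / ((k : ℝ) + 1)) * (0 : ℝ) ^ k) = 2 * Real.log 2 ∧
    (∀ z : ℝ, 0 < z → z < 1 →
      0 < (1 / 2 : ℝ) * (1 - ((1 - z) ^ 3 / (4 * Real.log 2)) *
        (∑' k : ℕ, ((k : ℝ) + 1) * ((k : ℝ) + 2) *
          Real.log (((k : ℝ) + 2) / ((k : ℝ) + 1)) * z ^ k) * 2)) ∧
    (1 / 2 : ℝ) * (1 - ((1 - (0 : ℝ)) ^ 3 / (4 * Real.log 2)) *
        (∑' k : ℕ, ((k : ℝ) + 1) * ((k : ℝ) + 2) *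
          Real.log (((k : ℝ) + 2) / ((k : ℝ) + 1)) * (0 : ℝ) ^ k) * 2) = 0 := by
  refine ⟨fun z hz₀ hz₁ ↦ one_sub_pow_three_mul_logRatioSeries_lt hz₀ hz₁, ?_,
    fun z hz₀ hz₁ ↦ privateQuantumCapacity_pos hz₀ hz₁, privateQuantumCapacity_zero⟩
  rw [sub_zero, one_pow, one_mul]
  exact logRatioSeries_zero
end
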